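/- Let β > 2, let (α_N) satisfy α_N > 0 and α_N → 0, let p(N) ∈ (0,1] satisfy N·p(N) → ∞, and assume p(N)·N·α_N → ∞. Then the pushforward of the quenched Gibbs measure μ^ε_{N,α_N,β} under σ ↦ (m₁(σ), m₂(σ)) converges in distribution in probability to (1/2)(δ_{(m⁺(β/2), m⁺(β/2))} + δ_{(m⁻(β/2), m⁻(β/2))}): for every bounded continuous f : ℝ² → ℝ and every η > 0, the P-probability that |∫ f(m₁,m₂) dμ^ε_{N,α_N,β} − ∫ f d((1/2)(δ_{(m⁺(β/2), m⁺(β/2))} + δ_{(m⁻(β/2), m⁻(β/2))}))| > η tends to 0 as N → ∞ through even integers. -/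

import Mathlib

open MeasureTheory Filter

noncomputable section

/-- The spin value ±1 associated to a Boolean. -/
def spinVal (s : Bool) : ℝ := if s then 1 else -1

/-- A spin configuration on `N = 2n` sites, split into the two blocks
`B₁` (first component) and `B₂` (second component); the perfect matching
pairs the `i`-th spin of `B₁` with the `i`-th spin of `B₂`. -/
abbrev TwoConf (n : ℕ) := (Fin n → Bool) × (Fin n → Bool)

/-- Block magnetization `m₁(σ) = (2/N) ∑_{i ∈ B₁} σᵢ` with `N = 2n`. -/
def mag1 (n : ℕ) (σ : TwoConf n) : ℝ := (2 / (2 * n : ℝ)) * ∑ i, spinVal (σ.1 i)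

/-- Block magnetization `m₂(σ) = (2/N) ∑_{i ∈ B₂} σᵢ` with `N = 2n`. -/
def mag2 (n : ℕ) (σ : TwoConf n) : ℝ := (2 / (2 * n : ℝ)) * ∑ i, spinVal (σ.2 i)

/-- The diluted Hamiltonian
`H^ε_{N,α,β}(σ) = −(β/(2N))(∑_{i,j∈B₁} σᵢσⱼ + ∑_{i,j∈B₂} σᵢσⱼ)
  − α ∑_{i∈B₁} ε_i σᵢ σ_{i+N/2}` with `N = 2n`. -/
def dilH (n : ℕ) (α β : ℝ) (ε : Fin n → Bool) (σ : TwoConf n) : ℝ :=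
  -(β / (2 * (2 * n : ℝ))) *
      ((∑ i, ∑ j, spinVal (σ.1 i) * spinVal (σ.1 j)) +
        ∑ i, ∑ j, spinVal (σ.2 i) * spinVal (σ.2 j))
    - α * ∑ i, (if ε i then (1 : ℝ) else 0) * (spinVal (σ.1 i) * spinVal (σ.2 i))

/-- The distribution of the magnetization vector `(m₁, m₂)` under the quenched Gibbs
measure `μ^ε_{N,α,β}`, i.e. the pushforward of `μ^ε_{N,α,β}` under `σ ↦ (m₁(σ), m₂(σ))`. -/
def dilMagDist (n : ℕ) (α β : ℝ) (ε : Fin n → Bool) : Measure (ℝ × ℝ) :=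
  (∑ σ : TwoConf n, ENNReal.ofReal (Real.exp (-dilH n α β ε σ)))⁻¹ •
    ∑ σ : TwoConf n,
      ENNReal.ofReal (Real.exp (-dilH n α β ε σ)) • Measure.dirac (mag1 n σ, mag2 n σ)

/-- The probability, under i.i.d. Bernoulli(q) dilution variables `(ε_i)_{i ∈ B₁}`,
of a set `A` of dilution configurations. -/
def bernProb (n : ℕ) (q : ℝ) (A : Set (Fin n → Bool)) : ℝ :=
  ∑ ε : Fin n → Bool, A.indicator (fun ε => ∏ i, if ε i then q else 1 - q) ε

/-!
Linearizing the quadratic energy at the mean field `a` bounds the weight of `{m₁ = a}` in a single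
Curie–Weiss block by `2ⁿ exp (n φ(a))` with `φ(a) = log cosh (γ a) - γ a² / 2`, while the same
expression at any `a` is a lower bound for the partition function. As `m₁` takes only `n + 1` values
and `φ` is maximal exactly at `± m⁺`, each block concentrates there, and a coupling `α → 0` costs
only a factor `exp (o(n))`.

The coupling matters for the relative sign of the blocks. Flip the second block in the sector
`m₁ ≥ c, m₂ ≤ -c`: this reverses the sign of `α` and gives both blocks magnetization at least `c`.
There the weights change by at most a factor `exp (6 |α|)` when two pairs of spins are exchanged
within blocks, so every `σᵢ σ_{i + n}` has mean at least `c² / 2`. Restoring the sign of `α` tilts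
by `exp (2 α x) ≥ 1 + 2 α x`, where `x` is the sum over the `K` surviving bonds, and the opposite
sector therefore has mass at most `1 / (1 + α K c²)`. By a Chernoff bound `K` is at least of order
`n p`, so that `α K → ∞`. The global spin flip then splits the mass equally between the two limit
points.
-/

lemma abs_exp_sub_one_le_exp_abs_sub_one (x : ℝ) : |Real.exp x - 1| ≤ Real.exp |x| - 1 := by
  have two_le_exp_add_exp_neg : 2 ≤ Real.exp x + Real.exp (-x) := by
    linarith [Real.add_one_le_exp x, Real.add_one_le_exp (-x)]
  rw [abs_le]
  rcases abs_cases x with ⟨h, hx⟩ | ⟨h, hx⟩ <;> rw [h]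
  · constructor <;> linarith [Real.one_le_exp hx]
  · constructor <;> linarith [Real.exp_le_one_iff.2 hx.le]

lemma hasDerivAt_real_tanh (x : ℝ) : HasDerivAt Real.tanh (1 / Real.cosh x ^ 2) x := by
  have h := (Real.hasDerivAt_sinh x).div (Real.hasDerivAt_cosh x) (Real.cosh_pos x).ne'
  rw [show Real.tanh = Real.sinh / Real.cosh from funext Real.tanh_eq_sinh_div_cosh]
  refine h.congr_deriv ?_
  rw [← Real.cosh_sq_sub_sinh_sq x]
  ring

lemma tendsto_natCast_add_one_mul_exp_neg {c : ℝ} (hc : 0 < c) :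
    Tendsto (fun n : ℕ => (n + 1) * Real.exp (-(c * n))) atTop (nhds 0) := by
  have scaled : Tendsto (fun n : ℕ => c * (n : ℝ)) atTop atTop :=
    tendsto_natCast_atTop_atTop.const_mul_atTop hc
  have linear := ((Real.tendsto_pow_mul_exp_neg_atTop_nhds_zero 1).comp scaled).const_mul c⁻¹
  have constant := Real.tendsto_exp_neg_atTop_nhds_zero.comp scaled
  refine ((linear.add constant).congr fun n => ?_).trans (by simp)
  simp only [Function.comp_apply]
  field_simp

lemma abs_sub_lt_or_abs_add_lt {a m δ : ℝ} (h : |(|a|) - m| < δ) : |a - m| < δ ∨ |a + m| < δ := by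
  rcases abs_choice a with ha | ha <;> rw [ha] at h
  · exact Or.inl h
  · exact Or.inr (by rwa [← abs_neg, neg_add'])

lemma abs_integral_le_add_mul_measureReal_compl {E : Type*} [MeasurableSpace E] {μ : Measure E}
    [IsProbabilityMeasure μ] {g : E → ℝ} {U : Set E} {η C : ℝ} (hU : MeasurableSet U)
    (hη : 0 ≤ η) (hgU : ∀ x ∈ U, |g x| ≤ η) (hgC : ∀ x, |g x| ≤ C) :
    |∫ x, g x ∂μ| ≤ η + C * μ.real Uᶜ := by
  have integrable_tail : Integrable (Uᶜ.indicator fun _ => C) μ :=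
    (integrable_const C).indicator hU.compl
  have bound (x : E) : |g x| ≤ η + Uᶜ.indicator (fun _ => C) x := by
    by_cases hx : x ∈ U
    · simpa [hx] using hgU x hx
    · simpa [hx] using (hgC x).trans (le_add_of_nonneg_left hη)
  calc |∫ x, g x ∂μ| ≤ ∫ x, (η + Uᶜ.indicator (fun _ => C) x) ∂μ :=
        norm_integral_le_of_norm_le (f := g) ((integrable_const η).add integrable_tail)
          (Eventually.of_forall bound)
    _ = η + C * μ.real Uᶜ := by
        rw [integral_add (integrable_const η) integrable_tail, integral_const,
          integral_indicator_const _ hU.compl]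
        simp [mul_comm]

section SymmetricMixture

variable {E : Type*} [TopologicalSpace E] [MeasurableSpace E] [OpensMeasurableSpace E]

lemma integral_half_dirac_add_dirac (f : BoundedContinuousFunction E ℝ) (a b : E) :
    ∫ x, f x ∂((2 : ENNReal)⁻¹ • (Measure.dirac a + Measure.dirac b)) = (f a + f b) / 2 := by
  have f_measurable := f.continuous.stronglyMeasurable
  rw [integral_smul_measure, integral_add_measure (f.integrable _) (f.integrable _),
    integral_dirac' _ _ f_measurable, integral_dirac' _ _ f_measurable]
  simp [div_eq_inv_mul]

/-- For a symmetric measure only the even part of `f` matters, and it takes the same value at `a`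
and `-a`. -/
lemma tendsto_integral_of_isNegInvariant [AddGroup E] [ContinuousNeg E] [MeasurableNeg E]
    {ι : Type*} {l : Filter ι} {μ : ι → Measure E} [∀ i, IsProbabilityMeasure (μ i)]
    [∀ i, (μ i).IsNegInvariant] {a : E}
    (hμ : ∀ U, IsOpen U → a ∈ U → -a ∈ U → Tendsto (fun i => (μ i).real Uᶜ) l (nhds 0))
    (f : BoundedContinuousFunction E ℝ) :
    Tendsto (fun i => ∫ x, f x ∂(μ i)) l
      (nhds (∫ x, f x ∂((2 : ENNReal)⁻¹ • (Measure.dirac a + Measure.dirac (-a))))) := by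
  set evenPart : E → ℝ := fun x => (f x + f (-x)) / 2 - (f a + f (-a)) / 2
  have evenPart_continuous : Continuous evenPart := by fun_prop
  have evenPart_le (x : E) : |evenPart x| ≤ 2 * ‖f‖ := by
    have f_bounds (y : E) : -‖f‖ ≤ f y ∧ f y ≤ ‖f‖ := abs_le.1 (f.norm_coe_le_norm y)
    simp only [evenPart, abs_le]
    constructor <;> linarith [f_bounds x, f_bounds (-x), f_bounds a, f_bounds (-a)]
  have integral_sub_eq (i : ι) :
      ∫ x, f x ∂(μ i) - (f a + f (-a)) / 2 = ∫ x, evenPart x ∂(μ i) := by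
    have f_integrable := f.integrable (μ i)
    have f_neg_integrable : Integrable (fun x => f (-x)) (μ i) := f_integrable.comp_neg
    have sum_integrable : Integrable (fun x => (f x + f (-x)) / 2) (μ i) :=
      (f_integrable.add f_neg_integrable).div_const 2
    simp only [evenPart]
    rw [integral_sub sum_integrable (integrable_const _), integral_div,
      integral_add f_integrable f_neg_integrable, integral_neg_eq_self f]
    simp
  rw [integral_half_dirac_add_dirac, Metric.tendsto_nhds]
  intro η hη
  set U := {x | |evenPart x| < η / 2}
  have U_open : IsOpen U := isOpen_lt evenPart_continuous.abs continuous_const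
  have tail_small : ∀ᶠ i in l, 2 * ‖f‖ * (μ i).real Uᶜ < η / 2 := by
    have tail_tendsto := (hμ U U_open (by simp [U, evenPart, hη])
      (by simp [U, evenPart, hη, add_comm])).const_mul (2 * ‖f‖)
    rw [mul_zero] at tail_tendsto
    exact tail_tendsto.eventually_lt_const (half_pos hη)
  filter_upwards [tail_small] with i hi
  rw [Real.dist_eq, integral_sub_eq]
  have := abs_integral_le_add_mul_measureReal_compl (μ := μ i) U_open.measurableSet
    (half_pos hη).le (fun _ hx => le_of_lt hx) evenPart_le
  linarith

end SymmetricMixture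

/-! ### A single Curie–Weiss block -/

lemma spinVal_not (b : Bool) : spinVal (!b) = -spinVal b := by
  cases b <;> simp [spinVal]

lemma abs_spinVal (b : Bool) : |spinVal b| = 1 := by
  cases b <;> simp [spinVal]

lemma abs_spinVal_mul_spinVal (a b : Bool) : |spinVal a * spinVal b| = 1 := by
  rw [abs_mul, abs_spinVal, abs_spinVal, one_mul]

/-- The magnetization per spin of a block of `n` spins; it is `0` for the empty block. -/
def blockMag {n : ℕ} (s : Fin n → Bool) : ℝ := (∑ i, spinVal (s i)) / n

lemma natCast_mul_blockMag {n : ℕ} (s : Fin n → Bool) :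
    n * blockMag s = ∑ i, spinVal (s i) := by
  rcases Nat.eq_zero_or_pos n with rfl | hn
  · simp
  · rw [blockMag]
    field_simp

lemma abs_blockMag_le_one {n : ℕ} (s : Fin n → Bool) : |blockMag s| ≤ 1 := by
  rw [blockMag, abs_div, Nat.abs_cast]
  refine div_le_one_of_le₀ ?_ n.cast_nonneg
  calc |∑ i, spinVal (s i)| ≤ ∑ i, |spinVal (s i)| := Finset.abs_sum_le_sum_abs _ _
    _ = n := by simp [abs_spinVal]

lemma card_image_blockMag_le (n : ℕ) :
    (Finset.univ.image (blockMag (n := n))).card ≤ n + 1 := by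
  have blockMag_eq (s : Fin n → Bool) :
      blockMag s = (2 * (Finset.univ.filter fun i => s i = true).card - n : ℝ) / n := by
    have spinVal_eq (b : Bool) : spinVal b = 2 * (if b = true then 1 else 0) - 1 := by
      cases b <;> norm_num [spinVal]
    simp only [blockMag, spinVal_eq, Finset.sum_sub_distrib, ← Finset.mul_sum, Finset.sum_boole]
    simp
  have image_subset : Finset.univ.image (blockMag (n := n)) ⊆
      (Finset.range (n + 1)).image fun k : ℕ => (2 * k - n : ℝ) / n := by
    intro a ha
    obtain ⟨s, -, rfl⟩ := Finset.mem_image.1 ha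
    refine Finset.mem_image.2 ⟨_, Finset.mem_range_succ_iff.2 ?_, (blockMag_eq s).symm⟩
    simpa using Finset.card_le_univ (Finset.univ.filter fun i => s i = true)
  calc _ ≤ _ := Finset.card_le_card image_subset
    _ ≤ (Finset.range (n + 1)).card := Finset.card_image_le
    _ = n + 1 := Finset.card_range _

lemma sum_exp_mul_blockMag (n : ℕ) (y : ℝ) :
    ∑ s : Fin n → Bool, Real.exp (n * (y * blockMag s)) = (2 * Real.cosh y) ^ n := by
  calc ∑ s : Fin n → Bool, Real.exp (n * (y * blockMag s))
      = ∑ s : Fin n → Bool, ∏ i, Real.exp (y * spinVal (s i)) := by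
        simp only [mul_left_comm _ y, natCast_mul_blockMag, Finset.mul_sum, Real.exp_sum]
    _ = ∏ _i : Fin n, ∑ b : Bool, Real.exp (y * spinVal b) := by
        rw [← Finset.sum_prod_piFinset, Fintype.piFinset_univ]
    _ = (2 * Real.cosh y) ^ n := by
        simp [spinVal, Real.cosh_eq]
        ring

/-- The Gibbs weight `exp (γ (∑ᵢ sᵢ)² / (2n))` of the Curie–Weiss model on `n` spins at inverse
temperature `γ`, written in terms of the magnetization so that it makes sense for `n = 0`. -/
def curieWeissWeight {n : ℕ} (γ : ℝ) (s : Fin n → Bool) : ℝ :=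
  Real.exp (n * (γ / 2 * blockMag s ^ 2))

/-- The exponential growth rate `log cosh (γ a) - γ a² / 2` of `2⁻ⁿ` times the partition function
of independent spins in the external field `γ a`, shifted by the energy of the mean field `a`. -/
def meanFieldExponent (γ a : ℝ) : ℝ := Real.log (Real.cosh (γ * a)) - γ * a ^ 2 / 2

lemma curieWeissWeight_pos {n : ℕ} (γ : ℝ) (s : Fin n → Bool) : 0 < curieWeissWeight γ s :=
  Real.exp_pos _

lemma sum_exp_linearized_energy (n : ℕ) (γ a : ℝ) :
    ∑ s : Fin n → Bool, Real.exp (n * (γ * a * blockMag s - γ * a ^ 2 / 2)) =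
      2 ^ n * Real.exp (n * meanFieldExponent γ a) := by
  simp only [mul_sub (n : ℝ), Real.exp_sub, ← Finset.sum_div]
  rw [sum_exp_mul_blockMag, mul_pow, meanFieldExponent, mul_sub, Real.exp_sub,
    Real.exp_nat_mul (Real.log _), Real.exp_log (Real.cosh_pos _), mul_div_assoc]

lemma two_pow_mul_exp_le_sum_curieWeissWeight (n : ℕ) {γ : ℝ} (hγ : 0 ≤ γ) (a : ℝ) :
    2 ^ n * Real.exp (n * meanFieldExponent γ a) ≤
      ∑ s : Fin n → Bool, curieWeissWeight γ s := by
  rw [← sum_exp_linearized_energy]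
  refine Finset.sum_le_sum fun s _ => Real.exp_le_exp.2 ?_
  have square_completion : γ / 2 * blockMag s ^ 2 - (γ * a * blockMag s - γ * a ^ 2 / 2) =
      γ / 2 * (blockMag s - a) ^ 2 := by ring
  have square_nonneg : 0 ≤ γ / 2 * (blockMag s - a) ^ 2 := by positivity
  gcongr
  linarith only [square_completion, square_nonneg]

lemma sum_curieWeissWeight_blockMag_eq_le (n : ℕ) (γ a : ℝ) :
    ∑ s : Fin n → Bool with blockMag s = a, curieWeissWeight γ s ≤
      2 ^ n * Real.exp (n * meanFieldExponent γ a) := by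
  rw [← sum_exp_linearized_energy]
  calc ∑ s : Fin n → Bool with blockMag s = a, curieWeissWeight γ s
      = ∑ s : Fin n → Bool with blockMag s = a,
          Real.exp (n * (γ * a * blockMag s - γ * a ^ 2 / 2)) := by
        refine Finset.sum_congr rfl fun s hs => ?_
        rw [curieWeissWeight, (Finset.mem_filter.1 hs).2]
        congr 2
        ring
    _ ≤ _ := Finset.sum_le_sum_of_subset_of_nonneg (Finset.filter_subset _ _)
        fun _ _ _ => (Real.exp_pos _).le

open Classical in
/-- The magnetization takes only `n + 1` values, so a union bound over them costs no exponential
factor. -/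
lemma sum_curieWeissWeight_blockMag_mem_le (n : ℕ) {γ m c : ℝ} {A : Set ℝ} (hγ : 0 ≤ γ)
    (hA : ∀ a ∈ A, |a| ≤ 1 → meanFieldExponent γ a + c ≤ meanFieldExponent γ m) :
    ∑ s : Fin n → Bool with blockMag s ∈ A, curieWeissWeight γ s ≤
      (n + 1) * Real.exp (-(c * n)) * ∑ s : Fin n → Bool, curieWeissWeight γ s := by
  set S : Finset (Fin n → Bool) := {s | blockMag s ∈ A}
  set Z := ∑ s : Fin n → Bool, curieWeissWeight γ s
  have fiber_le : ∀ a ∈ S.image blockMag,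
      ∑ s ∈ S with blockMag s = a, curieWeissWeight γ s ≤ Real.exp (-(c * n)) * Z := by
    intro a ha
    obtain ⟨s, hs, rfl⟩ := Finset.mem_image.1 ha
    have exponent_le := hA _ (Finset.mem_filter.1 hs).2 (abs_blockMag_le_one s)
    calc ∑ t ∈ S with blockMag t = blockMag s, curieWeissWeight γ t
        ≤ ∑ t : Fin n → Bool with blockMag t = blockMag s, curieWeissWeight γ t :=
          Finset.sum_le_sum_of_subset_of_nonneg
            (Finset.filter_subset_filter _ (Finset.subset_univ S))
            fun _ _ _ => (curieWeissWeight_pos γ _).le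
      _ ≤ 2 ^ n * Real.exp (n * meanFieldExponent γ (blockMag s)) :=
          sum_curieWeissWeight_blockMag_eq_le n γ _
      _ ≤ 2 ^ n * Real.exp (n * (-c + meanFieldExponent γ m)) := by
          gcongr
          linarith
      _ = Real.exp (-(c * n)) * (2 ^ n * Real.exp (n * meanFieldExponent γ m)) := by
          rw [mul_add, Real.exp_add, mul_left_comm, mul_neg, mul_comm (n : ℝ) c]
      _ ≤ Real.exp (-(c * n)) * Z := by
          gcongr
          exact two_pow_mul_exp_le_sum_curieWeissWeight n hγ m
  calc ∑ s ∈ S, curieWeissWeight γ s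
      = ∑ a ∈ S.image blockMag, ∑ s ∈ S with blockMag s = a, curieWeissWeight γ s :=
        (Finset.sum_fiberwise_of_maps_to (fun _ => Finset.mem_image_of_mem _) _).symm
    _ ≤ (S.image blockMag).card • (Real.exp (-(c * n)) * Z) :=
        Finset.sum_le_card_nsmul _ _ _ fiber_le
    _ ≤ (n + 1) * Real.exp (-(c * n)) * Z := by
        have Z_nonneg : 0 ≤ Z := Finset.sum_nonneg fun s _ => (curieWeissWeight_pos γ s).le
        have card_le : (S.image blockMag).card ≤ n + 1 :=
          (Finset.card_le_card (Finset.image_subset_image (Finset.subset_univ S))).trans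
            (card_image_blockMag_le n)
        rw [nsmul_eq_mul, mul_assoc]
        gcongr
        exact_mod_cast card_le

/-- The defect `tanh (γ x) - x` in the mean-field equation `x = tanh (γ x)`. -/
def meanFieldDefect (γ x : ℝ) : ℝ := Real.tanh (γ * x) - x

lemma meanFieldDefect_zero (γ : ℝ) : meanFieldDefect γ 0 = 0 := by
  simp [meanFieldDefect]

lemma meanFieldDefect_eq_zero_iff {γ x : ℝ} :
    meanFieldDefect γ x = 0 ↔ x = Real.tanh (γ * x) := by
  rw [meanFieldDefect, sub_eq_zero, eq_comm]

lemma hasDerivAt_meanFieldDefect (γ x : ℝ) :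
    HasDerivAt (meanFieldDefect γ) (γ / Real.cosh (γ * x) ^ 2 - 1) x := by
  have h := ((hasDerivAt_real_tanh (γ * x)).comp x (hasDerivAt_const_mul γ)).sub (hasDerivAt_id x)
  exact h.congr_deriv (by ring)

lemma continuous_meanFieldDefect (γ : ℝ) : Continuous (meanFieldDefect γ) :=
  continuous_iff_continuousAt.2 fun x => (hasDerivAt_meanFieldDefect γ x).continuousAt

lemma strictConcaveOn_meanFieldDefect {γ : ℝ} (hγ : 0 < γ) :
    StrictConcaveOn ℝ (Set.Ici 0) (meanFieldDefect γ) := by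
  refine StrictAntiOn.strictConcaveOn_of_deriv (convex_Ici 0)
    (continuous_meanFieldDefect γ).continuousOn fun x hx y hy hxy => ?_
  rw [interior_Ici, Set.mem_Ioi] at hx hy
  rw [(hasDerivAt_meanFieldDefect γ x).deriv, (hasDerivAt_meanFieldDefect γ y).deriv]
  have cosh_lt : Real.cosh (γ * x) < Real.cosh (γ * y) := by
    rw [Real.cosh_lt_cosh, abs_of_pos (by positivity), abs_of_pos (by positivity)]
    gcongr
  have := Real.cosh_pos (γ * x)
  gcongr

lemma exists_pos_eq_tanh_mul {γ : ℝ} (hγ : 1 < γ) : ∃ z, 0 < z ∧ z = Real.tanh (γ * z) := by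
  have deriv_pos : 0 < deriv (meanFieldDefect γ) 0 := by
    rw [(hasDerivAt_meanFieldDefect γ 0).deriv]
    simpa using hγ
  have eventually_pos : ∀ᶠ x in nhdsWithin 0 (Set.Ioi 0), 0 < meanFieldDefect γ x := by
    have := eventually_nhdsWithin_sign_eq_of_deriv_pos deriv_pos (meanFieldDefect_zero γ)
    filter_upwards [this.filter_mono nhdsWithin_le_nhds, self_mem_nhdsWithin] with x hx hx0
    rw [sub_zero, sign_pos (Set.mem_Ioi.1 hx0)] at hx
    exact sign_eq_one_iff.1 hx
  obtain ⟨x, hx, hx0, hx1⟩ := (eventually_pos.and (Ioo_mem_nhdsGT one_pos)).exists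
  have defect_one_neg : meanFieldDefect γ 1 < 0 := sub_neg.2 (Real.tanh_lt_one _)
  obtain ⟨z, hz, hz0⟩ := intermediate_value_Icc' hx1.le
    (continuous_meanFieldDefect γ).continuousOn ⟨defect_one_neg.le, hx.le⟩
  exact ⟨z, hx0.trans_le hz.1, meanFieldDefect_eq_zero_iff.1 hz0⟩

lemma meanFieldDefect_pos {γ m x : ℝ} (hγ : 0 < γ) (hm : m = Real.tanh (γ * m))
    (hx : 0 < x) (hxm : x < m) : 0 < meanFieldDefect γ x := by
  have h := (strictConcaveOn_meanFieldDefect hγ).lt_on_openSegment Set.self_mem_Ici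
    (Set.mem_Ici.2 (hx.trans hxm).le) (hx.trans hxm).ne
    (by rw [openSegment_eq_Ioo (hx.trans hxm)]; exact ⟨hx, hxm⟩)
  rwa [meanFieldDefect_zero, meanFieldDefect_eq_zero_iff.2 hm, min_self] at h

lemma meanFieldDefect_neg {γ m x : ℝ} (hγ : 0 < γ) (hm : m = Real.tanh (γ * m))
    (hm0 : 0 < m) (hmx : m < x) : meanFieldDefect γ x < 0 := by
  have h := (strictConcaveOn_meanFieldDefect hγ).lt_on_openSegment Set.self_mem_Ici
    (Set.mem_Ici.2 (hm0.trans hmx).le) (hm0.trans hmx).ne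
    (by rw [openSegment_eq_Ioo (hm0.trans hmx)]; exact ⟨hm0, hmx⟩)
  rw [meanFieldDefect_zero, meanFieldDefect_eq_zero_iff.2 hm] at h
  simpa using h

lemma meanFieldExponent_abs (γ a : ℝ) : meanFieldExponent γ |a| = meanFieldExponent γ a := by
  rcases abs_choice a with h | h <;> simp [h, meanFieldExponent]

lemma hasDerivAt_meanFieldExponent (γ a : ℝ) :
    HasDerivAt (meanFieldExponent γ) (γ * meanFieldDefect γ a) a := by
  have log_cosh := ((Real.hasDerivAt_cosh (γ * a)).comp a (hasDerivAt_const_mul γ)).log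
    (Real.cosh_pos _).ne'
  have quadratic := ((hasDerivAt_pow 2 a).const_mul γ).div_const 2
  refine (log_cosh.sub quadratic).congr_deriv ?_
  rw [meanFieldDefect, Real.tanh_eq_sinh_div_cosh]
  simp
  ring

lemma continuous_meanFieldExponent (γ : ℝ) : Continuous (meanFieldExponent γ) :=
  continuous_iff_continuousAt.2 fun a => (hasDerivAt_meanFieldExponent γ a).continuousAt

lemma meanFieldExponent_lt {γ m a : ℝ} (hγ : 0 < γ) (hm : m = Real.tanh (γ * m)) (hm0 : 0 < m)
    (ha : |a| ≠ m) : meanFieldExponent γ a < meanFieldExponent γ m := by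
  rw [← meanFieldExponent_abs γ a]
  rcases ha.lt_or_gt with h | h
  · have increasing : StrictMonoOn (meanFieldExponent γ) (Set.Icc 0 m) := by
      refine strictMonoOn_of_deriv_pos (convex_Icc 0 m)
        (continuous_meanFieldExponent γ).continuousOn fun y hy => ?_
      rw [interior_Icc] at hy
      rw [(hasDerivAt_meanFieldExponent γ y).deriv]
      exact mul_pos hγ (meanFieldDefect_pos hγ hm hy.1 hy.2)
    exact increasing ⟨abs_nonneg a, h.le⟩ ⟨hm0.le, le_rfl⟩ h
  · have decreasing : StrictAntiOn (meanFieldExponent γ) (Set.Ici m) := by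
      refine strictAntiOn_of_deriv_neg (convex_Ici m)
        (continuous_meanFieldExponent γ).continuousOn fun y hy => ?_
      rw [interior_Ici] at hy
      rw [(hasDerivAt_meanFieldExponent γ y).deriv]
      exact mul_neg_of_pos_of_neg hγ (meanFieldDefect_neg hγ hm hm0 hy)
    exact decreasing Set.self_mem_Ici h.le h

lemma exists_meanFieldExponent_add_le {γ m : ℝ} (hγ : 0 < γ) (hm : m = Real.tanh (γ * m))
    (hm0 : 0 < m) {A : Set ℝ} (hA : IsClosed A) (hmA : ∀ a ∈ A, |a| ≠ m) :
    ∃ c, 0 < c ∧ ∀ a ∈ A, |a| ≤ 1 → meanFieldExponent γ a + c ≤ meanFieldExponent γ m := by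
  obtain ⟨c, hc, hcA⟩ :=
    ((isCompact_Icc (a := (-1 : ℝ)) (b := 1)).inter_right hA).exists_forall_le'
      (f := fun a => meanFieldExponent γ m - meanFieldExponent γ a)
      (continuous_const.sub (continuous_meanFieldExponent γ)).continuousOn
      fun a ha => sub_pos.2 (meanFieldExponent_lt hγ hm hm0 (hmA a ha.2))
  exact ⟨c, hc, fun a ha ha1 => by linarith [hcA a ⟨abs_le.1 ha1, ha⟩]⟩

/-! ### The two-block Gibbs measure -/

/-- The matched interaction `∑ᵢ εᵢ σᵢ σ_{i + n}` between the two blocks. -/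
def matchedOverlap {n : ℕ} (ε : Fin n → Bool) (σ : TwoConf n) : ℝ :=
  ∑ i, (if ε i then (1 : ℝ) else 0) * (spinVal (σ.1 i) * spinVal (σ.2 i))

/-- The number `∑ᵢ εᵢ` of bonds between the two blocks that survive the dilution, as a real. -/
def bondCount {n : ℕ} (ε : Fin n → Bool) : ℝ := ∑ i, if ε i then (1 : ℝ) else 0

/-- The unnormalized Gibbs weight `exp (-H)` of the diluted model: two Curie–Weiss blocks at inverse
temperature `β / 2`, coupled by the matched interaction. -/
def gibbsWeight {n : ℕ} (α β : ℝ) (ε : Fin n → Bool) (σ : TwoConf n) : ℝ :=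
  curieWeissWeight (β / 2) σ.1 * curieWeissWeight (β / 2) σ.2 * Real.exp (α * matchedOverlap ε σ)

/-- The partition function of the diluted model. -/
def partitionFunction {n : ℕ} (α β : ℝ) (ε : Fin n → Bool) : ℝ :=
  ∑ σ : TwoConf n, gibbsWeight α β ε σ

lemma bondCount_nonneg {n : ℕ} (ε : Fin n → Bool) : 0 ≤ bondCount ε :=
  Finset.sum_nonneg fun i _ => by split_ifs <;> norm_num

lemma gibbsWeight_pos {n : ℕ} (α β : ℝ) (ε : Fin n → Bool) (σ : TwoConf n) :
    0 < gibbsWeight α β ε σ :=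
  mul_pos (mul_pos (curieWeissWeight_pos _ _) (curieWeissWeight_pos _ _)) (Real.exp_pos _)

lemma partitionFunction_pos {n : ℕ} (α β : ℝ) (ε : Fin n → Bool) :
    0 < partitionFunction α β ε :=
  Finset.sum_pos (fun σ _ => gibbsWeight_pos α β ε σ) Finset.univ_nonempty

lemma curieWeissWeight_eq_exp_sum {n : ℕ} (γ : ℝ) (s : Fin n → Bool) :
    curieWeissWeight γ s = Real.exp (γ / (2 * n) * ∑ i, ∑ j, spinVal (s i) * spinVal (s j)) := by
  rcases Nat.eq_zero_or_pos n with rfl | hn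
  · simp [curieWeissWeight]
  · rw [curieWeissWeight, blockMag, ← Finset.sum_mul_sum]
    congr 1
    field_simp

lemma exp_neg_dilH {n : ℕ} (α β : ℝ) (ε : Fin n → Bool) (σ : TwoConf n) :
    Real.exp (-dilH n α β ε σ) = gibbsWeight α β ε σ := by
  rw [gibbsWeight, curieWeissWeight_eq_exp_sum, curieWeissWeight_eq_exp_sum, matchedOverlap,
    ← Real.exp_add, ← Real.exp_add, dilH]
  congr 1
  ring

lemma dilMagDist_eq_sum_dirac_blockMag {n : ℕ} (α β : ℝ) (ε : Fin n → Bool) :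
    dilMagDist n α β ε = (ENNReal.ofReal (partitionFunction α β ε))⁻¹ •
      ∑ σ : TwoConf n, ENNReal.ofReal (gibbsWeight α β ε σ) •
        Measure.dirac (blockMag σ.1, blockMag σ.2) := by
  have magnetization_eq (s : Fin n → Bool) :
      2 / (2 * n : ℝ) * ∑ i, spinVal (s i) = blockMag s := by
    simp only [blockMag, div_mul_eq_mul_div, mul_div_mul_left _ _ (two_ne_zero (α := ℝ))]
  simp only [dilMagDist, mag1, mag2, magnetization_eq, exp_neg_dilH, partitionFunction,
    ENNReal.ofReal_sum_of_nonneg fun σ _ => (gibbsWeight_pos α β ε σ).le]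

lemma dilMagDist_real_apply {n : ℕ} (α β : ℝ) (ε : Fin n → Bool) {S : Set (ℝ × ℝ)}
    [DecidablePred (· ∈ S)] (hS : MeasurableSet S) :
    (dilMagDist n α β ε).real S =
      (∑ σ : TwoConf n with (blockMag σ.1, blockMag σ.2) ∈ S, gibbsWeight α β ε σ) /
        partitionFunction α β ε := by
  have mass_eq : (∑ σ : TwoConf n, ENNReal.ofReal (gibbsWeight α β ε σ) •
      Measure.dirac (blockMag σ.1, blockMag σ.2)) S = ENNReal.ofReal
        (∑ σ : TwoConf n with (blockMag σ.1, blockMag σ.2) ∈ S, gibbsWeight α β ε σ) := by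
    rw [ENNReal.ofReal_sum_of_nonneg fun σ _ => (gibbsWeight_pos α β ε σ).le,
      Measure.finsetSum_apply, Finset.sum_filter]
    refine Finset.sum_congr rfl fun σ _ => ?_
    simp [Measure.dirac_apply' _ hS, Set.indicator_apply]
  rw [measureReal_def, dilMagDist_eq_sum_dirac_blockMag, Measure.smul_apply, mass_eq, smul_eq_mul,
    ENNReal.toReal_mul, ENNReal.toReal_inv, ENNReal.toReal_ofReal (partitionFunction_pos α β ε).le,
    ENNReal.toReal_ofReal (Finset.sum_nonneg fun σ _ => (gibbsWeight_pos α β ε σ).le), mul_comm,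
    div_eq_mul_inv]

instance isProbabilityMeasure_dilMagDist {n : ℕ} (α β : ℝ) (ε : Fin n → Bool) :
    IsProbabilityMeasure (dilMagDist n α β ε) := by
  refine isProbabilityMeasure_iff_real.2 ?_
  simp only [dilMagDist_real_apply α β ε MeasurableSet.univ, Set.mem_univ, Finset.filter_true]
  exact div_self (partitionFunction_pos α β ε).ne'

lemma measurePreserving_dilMagDist {n : ℕ} {α β : ℝ} {ε : Fin n → Bool}
    (e : Equiv.Perm (TwoConf n)) {g : ℝ × ℝ → ℝ × ℝ} (hg : Measurable g)
    (he : ∀ σ, gibbsWeight α β ε (e σ) = gibbsWeight α β ε σ)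
    (hge : ∀ σ, (blockMag (e σ).1, blockMag (e σ).2) = g (blockMag σ.1, blockMag σ.2)) :
    MeasurePreserving g (dilMagDist n α β ε) (dilMagDist n α β ε) := by
  refine ⟨hg, ?_⟩
  rw [dilMagDist_eq_sum_dirac_blockMag, Measure.map_smul, Measure.map_finset_sum' hg.aemeasurable]
  congr 1
  rw [← Equiv.sum_comp e fun σ => ENNReal.ofReal (gibbsWeight α β ε σ) •
    Measure.dirac (blockMag σ.1, blockMag σ.2)]
  refine Finset.sum_congr rfl fun σ _ => ?_
  rw [Measure.map_smul, Measure.map_dirac' hg, he, hge]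

/-- The global spin flip of a block. -/
def flipSpins (n : ℕ) : Equiv.Perm (Fin n → Bool) := (Equiv.refl (Fin n)).arrowCongr Equiv.boolNot

lemma spinVal_flipSpins {n : ℕ} (s : Fin n → Bool) (i : Fin n) :
    spinVal (flipSpins n s i) = -spinVal (s i) :=
  spinVal_not (s i)

lemma blockMag_flipSpins {n : ℕ} (s : Fin n → Bool) : blockMag (flipSpins n s) = -blockMag s := by
  simp only [blockMag, spinVal_flipSpins, Finset.sum_neg_distrib, neg_div]

lemma curieWeissWeight_flipSpins {n : ℕ} (γ : ℝ) (s : Fin n → Bool) :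
    curieWeissWeight γ (flipSpins n s) = curieWeissWeight γ s := by
  rw [curieWeissWeight, blockMag_flipSpins, neg_sq, curieWeissWeight]

lemma gibbsWeight_flipSpins_right {n : ℕ} (α β : ℝ) (ε : Fin n → Bool) (σ : TwoConf n) :
    gibbsWeight α β ε (σ.1, flipSpins n σ.2) = gibbsWeight (-α) β ε σ := by
  have overlap_neg : matchedOverlap ε (σ.1, flipSpins n σ.2) = -matchedOverlap ε σ := by
    simp only [matchedOverlap, spinVal_flipSpins, mul_neg, Finset.sum_neg_distrib]
  rw [gibbsWeight, gibbsWeight, curieWeissWeight_flipSpins, overlap_neg, mul_neg, neg_mul]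

instance isNegInvariant_dilMagDist {n : ℕ} (α β : ℝ) (ε : Fin n → Bool) :
    (dilMagDist n α β ε).IsNegInvariant where
  neg_eq_self := by
    refine (measurePreserving_dilMagDist ((flipSpins n).prodCongr (flipSpins n)) measurable_neg
      (fun σ => ?_) fun σ => ?_).map_eq
    · simp [gibbsWeight, matchedOverlap, curieWeissWeight_flipSpins, spinVal_flipSpins]
    · simp [blockMag_flipSpins]

lemma measurePreserving_swap_dilMagDist {n : ℕ} (α β : ℝ) (ε : Fin n → Bool) :
    MeasurePreserving Prod.swap (dilMagDist n α β ε) (dilMagDist n α β ε) := by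
  refine measurePreserving_dilMagDist (Equiv.prodComm _ _) measurable_swap (fun σ => ?_)
    fun _ => rfl
  simp only [gibbsWeight, matchedOverlap, Equiv.prodComm_apply, Prod.fst_swap, Prod.snd_swap,
    mul_comm (curieWeissWeight (β / 2) σ.2), mul_comm (spinVal (σ.2 _))]

/-! ### Concentration of each block magnetization -/

lemma abs_matchedOverlap_le {n : ℕ} (ε : Fin n → Bool) (σ : TwoConf n) :
    |matchedOverlap ε σ| ≤ n := by
  calc |matchedOverlap ε σ|
      ≤ ∑ i, |(if ε i then (1 : ℝ) else 0) * (spinVal (σ.1 i) * spinVal (σ.2 i))| :=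
        Finset.abs_sum_le_sum_abs _ _
    _ ≤ ∑ _i : Fin n, (1 : ℝ) := by
        refine Finset.sum_le_sum fun i _ => ?_
        rw [abs_mul, abs_spinVal_mul_spinVal, mul_one]
        split_ifs <;> simp
    _ = n := by simp

lemma abs_mul_matchedOverlap_le {n : ℕ} (α : ℝ) (ε : Fin n → Bool) (σ : TwoConf n) :
    |α * matchedOverlap ε σ| ≤ |α| * n := by
  rw [abs_mul]
  gcongr
  exact abs_matchedOverlap_le ε σ

lemma gibbsWeight_le {n : ℕ} (α β : ℝ) (ε : Fin n → Bool) (σ : TwoConf n) :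
    gibbsWeight α β ε σ ≤ Real.exp (|α| * n) *
      (curieWeissWeight (β / 2) σ.1 * curieWeissWeight (β / 2) σ.2) := by
  have := curieWeissWeight_pos (β / 2) σ.1
  have := curieWeissWeight_pos (β / 2) σ.2
  rw [gibbsWeight, mul_comm]
  exact mul_le_mul_of_nonneg_right
    (Real.exp_le_exp.2 (abs_le.1 (abs_mul_matchedOverlap_le α ε σ)).2) (by positivity)

lemma le_partitionFunction {n : ℕ} (α β : ℝ) (ε : Fin n → Bool) :
    Real.exp (-(|α| * n)) * (∑ s : Fin n → Bool, curieWeissWeight (β / 2) s) ^ 2 ≤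
      partitionFunction α β ε := by
  rw [sq, Finset.sum_mul_sum, ← Fintype.sum_prod_type', Finset.mul_sum, partitionFunction]
  refine Finset.sum_le_sum fun σ _ => ?_
  have := curieWeissWeight_pos (β / 2) σ.1
  have := curieWeissWeight_pos (β / 2) σ.2
  rw [gibbsWeight, mul_comm]
  gcongr
  exact (abs_le.1 (abs_mul_matchedOverlap_le α ε σ)).1

open Classical in
/-- The coupling changes every weight by a factor at most `exp (|α| n)`, so the large deviation
bound for a single Curie–Weiss block survives as long as `2 |α| < c`. -/
lemma dilMagDist_real_fst_mem_le {n : ℕ} {α β m c : ℝ} (hβ : 0 ≤ β) (ε : Fin n → Bool)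
    {A : Set ℝ} (hA : MeasurableSet A)
    (hAc : ∀ a ∈ A, |a| ≤ 1 → meanFieldExponent (β / 2) a + c ≤ meanFieldExponent (β / 2) m) :
    (dilMagDist n α β ε).real {x | x.1 ∈ A} ≤ (n + 1) * Real.exp ((2 * |α| - c) * n) := by
  set Z := ∑ s : Fin n → Bool, curieWeissWeight (β / 2) s
  have Z_nonneg : 0 ≤ Z := Finset.sum_nonneg fun s _ => (curieWeissWeight_pos _ s).le
  have block_le := sum_curieWeissWeight_blockMag_mem_le n (by positivity) hAc
  rw [dilMagDist_real_apply α β ε (S := {x | x.1 ∈ A}) (measurable_fst hA),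
    div_le_iff₀ (partitionFunction_pos α β ε)]
  calc ∑ σ : TwoConf n with (blockMag σ.1, blockMag σ.2) ∈ {x : ℝ × ℝ | x.1 ∈ A},
        gibbsWeight α β ε σ
      ≤ ∑ σ ∈ (Finset.univ.filter fun s : Fin n → Bool => blockMag s ∈ A) ×ˢ Finset.univ,
          Real.exp (|α| * n) *
            (curieWeissWeight (β / 2) σ.1 * curieWeissWeight (β / 2) σ.2) := by
        refine Finset.sum_le_sum_of_subset_of_nonneg (fun σ => by simp) (fun σ _ _ => ?_) |>.trans
          (Finset.sum_le_sum fun σ _ => gibbsWeight_le α β ε σ)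
        exact (gibbsWeight_pos α β ε σ).le
    _ = Real.exp (|α| * n) *
          ((∑ s : Fin n → Bool with blockMag s ∈ A, curieWeissWeight (β / 2) s) * Z) := by
        rw [← Finset.mul_sum, Finset.sum_mul_sum, Finset.sum_product]
    _ ≤ Real.exp (|α| * n) * ((n + 1) * Real.exp (-(c * n)) * Z * Z) := by gcongr
    _ = (n + 1) * Real.exp ((2 * |α| - c) * n) * (Real.exp (-(|α| * n)) * Z ^ 2) := by
        have exponents : Real.exp (|α| * n) * Real.exp (-(c * n)) =
            Real.exp ((2 * |α| - c) * n) * Real.exp (-(|α| * n)) := by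
          rw [← Real.exp_add, ← Real.exp_add]
          ring_nf
        linear_combination (n + 1) * Z ^ 2 * exponents
    _ ≤ (n + 1) * Real.exp ((2 * |α| - c) * n) * partitionFunction α β ε := by
        gcongr
        exact le_partitionFunction α β ε

/-! ### Sectors of opposite magnetizations -/

lemma abs_matchedOverlap_sub_le {n : ℕ} (ε : Fin n → Bool) {σ τ : TwoConf n} {T : Finset (Fin n)}
    (hT : ∀ l ∉ T, τ.1 l = σ.1 l ∧ τ.2 l = σ.2 l) :
    |matchedOverlap ε τ - matchedOverlap ε σ| ≤ 2 * T.card := by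
  rw [matchedOverlap, matchedOverlap, ← Finset.sum_sub_distrib,
    ← Finset.sum_subset (Finset.subset_univ T) fun l _ hl => by simp [hT l hl]]
  refine (Finset.abs_sum_le_sum_abs _ _).trans ((Finset.sum_le_card_nsmul _ _ 2 fun l _ => ?_).trans
    (by rw [nsmul_eq_mul, mul_comm]))
  rw [← mul_sub]
  split_ifs
  · rw [one_mul]
    refine (abs_sub _ _).trans ?_
    rw [abs_spinVal_mul_spinVal, abs_spinVal_mul_spinVal, one_add_one_eq_two]
  · simp

/-- The transposition of the spins at sites `i` and `j` of the first block, together with that of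
the spins at sites `i` and `k` of the second block. -/
def exchangeSpins {n : ℕ} (i j k : Fin n) : Equiv.Perm (TwoConf n) :=
  ((Equiv.swap i j).arrowCongr (Equiv.refl Bool)).prodCongr
    ((Equiv.swap i k).arrowCongr (Equiv.refl Bool))

lemma exchangeSpins_apply {n : ℕ} (i j k : Fin n) (σ : TwoConf n) :
    exchangeSpins i j k σ = (σ.1 ∘ Equiv.swap i j, σ.2 ∘ Equiv.swap i k) := rfl

lemma blockMag_comp_perm {n : ℕ} (s : Fin n → Bool) (e : Equiv.Perm (Fin n)) :
    blockMag (s ∘ e) = blockMag s := by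
  simp only [blockMag, Function.comp_apply, Equiv.sum_comp e fun i => spinVal (s i)]

lemma abs_matchedOverlap_exchangeSpins_sub_le {n : ℕ} (ε : Fin n → Bool) (i j k : Fin n)
    (σ : TwoConf n) :
    |matchedOverlap ε (exchangeSpins i j k σ) - matchedOverlap ε σ| ≤ 6 := by
  have unchanged : ∀ l ∉ ({i, j, k} : Finset (Fin n)), (exchangeSpins i j k σ).1 l = σ.1 l ∧
      (exchangeSpins i j k σ).2 l = σ.2 l := by
    intro l hl
    simp only [Finset.mem_insert, Finset.mem_singleton, not_or] at hl
    simp [exchangeSpins_apply, Equiv.swap_apply_of_ne_of_ne, hl]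
  refine (abs_matchedOverlap_sub_le ε unchanged).trans ?_
  have : (({i, j, k} : Finset (Fin n)).card : ℝ) ≤ 3 := by exact_mod_cast Finset.card_le_three
  linarith

lemma abs_gibbsWeight_exchangeSpins_sub_le {n : ℕ} (α β : ℝ) (ε : Fin n → Bool) (i j k : Fin n)
    (σ : TwoConf n) :
    |gibbsWeight α β ε (exchangeSpins i j k σ) - gibbsWeight α β ε σ| ≤
      (Real.exp (6 * |α|) - 1) * gibbsWeight α β ε σ := by
  set d := matchedOverlap ε (exchangeSpins i j k σ) - matchedOverlap ε σ
  have ratio : gibbsWeight α β ε (exchangeSpins i j k σ) =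
      gibbsWeight α β ε σ * Real.exp (α * d) := by
    have overlap : matchedOverlap ε (exchangeSpins i j k σ) = matchedOverlap ε σ + d := by
      simp [d]
    rw [gibbsWeight, overlap, mul_add, Real.exp_add]
    simp only [gibbsWeight, curieWeissWeight, exchangeSpins_apply, blockMag_comp_perm, mul_assoc]
  have exponent_le : |α * d| ≤ 6 * |α| := by
    rw [abs_mul, mul_comm]
    gcongr
    exact abs_matchedOverlap_exchangeSpins_sub_le ε i j k σ
  calc |gibbsWeight α β ε (exchangeSpins i j k σ) - gibbsWeight α β ε σ|
      = |Real.exp (α * d) - 1| * gibbsWeight α β ε σ := by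
        rw [ratio, ← mul_sub_one, abs_mul, abs_of_pos (gibbsWeight_pos α β ε σ), mul_comm]
    _ ≤ (Real.exp (6 * |α|) - 1) * gibbsWeight α β ε σ := by
        have := gibbsWeight_pos α β ε σ
        gcongr
        exact (abs_exp_sub_one_le_exp_abs_sub_one _).trans (by gcongr)

/-- The configurations in which both block magnetizations are at least `c`. -/
def alignedSector (n : ℕ) (c : ℝ) : Finset (TwoConf n) :=
  {σ | c ≤ blockMag σ.1 ∧ c ≤ blockMag σ.2}

lemma sum_alignedSector_spin_mul_spin_le {n : ℕ} (α β c : ℝ) (ε : Fin n → Bool) (i j k : Fin n) :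
    ∑ σ ∈ alignedSector n c, gibbsWeight α β ε σ * (spinVal (σ.1 j) * spinVal (σ.2 k)) ≤
      ∑ σ ∈ alignedSector n c, gibbsWeight α β ε σ * (spinVal (σ.1 i) * spinVal (σ.2 i)) +
        (Real.exp (6 * |α|) - 1) * ∑ σ ∈ alignedSector n c, gibbsWeight α β ε σ := by
  have reindex : ∑ σ ∈ alignedSector n c,
        gibbsWeight α β ε σ * (spinVal (σ.1 j) * spinVal (σ.2 k)) =
      ∑ σ ∈ alignedSector n c,
        gibbsWeight α β ε (exchangeSpins i j k σ) * (spinVal (σ.1 i) * spinVal (σ.2 i)) := by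
    refine (Finset.sum_equiv (exchangeSpins i j k) (fun σ => ?_) fun σ _ => ?_).symm
    · simp [alignedSector, exchangeSpins_apply, blockMag_comp_perm]
    · simp [exchangeSpins_apply]
  rw [reindex, Finset.mul_sum, ← Finset.sum_add_distrib]
  refine Finset.sum_le_sum fun σ _ => ?_
  have difference_le : (gibbsWeight α β ε (exchangeSpins i j k σ) - gibbsWeight α β ε σ) *
      (spinVal (σ.1 i) * spinVal (σ.2 i)) ≤ (Real.exp (6 * |α|) - 1) * gibbsWeight α β ε σ := by
    refine (le_abs_self _).trans ?_
    rw [abs_mul, abs_spinVal_mul_spinVal, mul_one]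
    exact abs_gibbsWeight_exchangeSpins_sub_le α β ε i j k σ
  linarith

lemma le_sum_alignedSector_bond {n : ℕ} (α β : ℝ) {c : ℝ} (hc : 0 ≤ c) (ε : Fin n → Bool)
    (i : Fin n) :
    (c ^ 2 - (Real.exp (6 * |α|) - 1)) * ∑ σ ∈ alignedSector n c, gibbsWeight α β ε σ ≤
      ∑ σ ∈ alignedSector n c, gibbsWeight α β ε σ * (spinVal (σ.1 i) * spinVal (σ.2 i)) := by
  set W := ∑ σ ∈ alignedSector n c, gibbsWeight α β ε σ
  set B := ∑ σ ∈ alignedSector n c, gibbsWeight α β ε σ * (spinVal (σ.1 i) * spinVal (σ.2 i))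
  have n_pos : (0 : ℝ) < n := Nat.cast_pos.2 i.pos
  have averaged : (n : ℝ) ^ 2 * (c ^ 2 * W) ≤ n ^ 2 * (B + (Real.exp (6 * |α|) - 1) * W) := by
    calc (n : ℝ) ^ 2 * (c ^ 2 * W)
        ≤ ∑ σ ∈ alignedSector n c,
            gibbsWeight α β ε σ * ((n * blockMag σ.1) * (n * blockMag σ.2)) := by
          rw [Finset.mul_sum, Finset.mul_sum]
          refine Finset.sum_le_sum fun σ hσ => ?_
          have := gibbsWeight_pos α β ε σ
          obtain ⟨-, h₁, h₂⟩ := Finset.mem_filter.1 hσ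
          have := hc.trans h₁
          calc (n : ℝ) ^ 2 * (c ^ 2 * gibbsWeight α β ε σ)
              = gibbsWeight α β ε σ * ((n * c) * (n * c)) := by ring
            _ ≤ _ := by gcongr
      _ = ∑ j, ∑ k, ∑ σ ∈ alignedSector n c,
            gibbsWeight α β ε σ * (spinVal (σ.1 j) * spinVal (σ.2 k)) := by
          simp_rw [natCast_mul_blockMag, Finset.sum_mul_sum, Finset.mul_sum]
          rw [Finset.sum_comm]
          exact Finset.sum_congr rfl fun j _ => Finset.sum_comm
      _ ≤ ∑ _j : Fin n, ∑ _k : Fin n, (B + (Real.exp (6 * |α|) - 1) * W) :=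
          Finset.sum_le_sum fun j _ => Finset.sum_le_sum fun k _ =>
            sum_alignedSector_spin_mul_spin_le α β c ε i j k
      _ = n ^ 2 * (B + (Real.exp (6 * |α|) - 1) * W) := by
          simp only [Finset.sum_const, Finset.card_univ, Fintype.card_fin, nsmul_eq_mul]
          ring
  linarith [le_of_mul_le_mul_left averaged (by positivity)]

lemma bondCount_mul_le_sum_alignedSector {n : ℕ} (α β : ℝ) {c : ℝ} (hc : 0 ≤ c)
    (ε : Fin n → Bool) :
    bondCount ε * (c ^ 2 - (Real.exp (6 * |α|) - 1)) *
        ∑ σ ∈ alignedSector n c, gibbsWeight α β ε σ ≤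
      ∑ σ ∈ alignedSector n c, gibbsWeight α β ε σ * matchedOverlap ε σ := by
  have bondwise : ∑ σ ∈ alignedSector n c, gibbsWeight α β ε σ * matchedOverlap ε σ =
      ∑ i, (if ε i then (1 : ℝ) else 0) * ∑ σ ∈ alignedSector n c,
        gibbsWeight α β ε σ * (spinVal (σ.1 i) * spinVal (σ.2 i)) := by
    simp only [matchedOverlap, Finset.mul_sum]
    rw [Finset.sum_comm]
    exact Finset.sum_congr rfl fun i _ => Finset.sum_congr rfl fun σ _ => mul_left_comm _ _ _
  rw [bondwise, mul_assoc, bondCount, Finset.sum_mul]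
  refine Finset.sum_le_sum fun i _ => ?_
  gcongr
  exact le_sum_alignedSector_bond α β hc ε i

/-- Reversing the sign of the coupling amounts to tilting by `exp (2 α x) ≥ 1 + 2 α x`, where `x` is
the matched interaction. -/
lemma sum_alignedSector_neg_le_partitionFunction {n : ℕ} {α β c : ℝ} (hα : 0 ≤ α) (hc : 0 ≤ c)
    (hαc : Real.exp (6 * α) - 1 ≤ c ^ 2 / 2) (ε : Fin n → Bool) :
    (1 + α * bondCount ε * c ^ 2) * ∑ σ ∈ alignedSector n c, gibbsWeight (-α) β ε σ ≤
      partitionFunction α β ε := by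
  set W := ∑ σ ∈ alignedSector n c, gibbsWeight (-α) β ε σ
  have W_nonneg : 0 ≤ W := Finset.sum_nonneg fun σ _ => (gibbsWeight_pos _ _ _ _).le
  have := bondCount_nonneg ε
  have overlap_le := bondCount_mul_le_sum_alignedSector (-α) β hc ε
  rw [abs_neg, abs_of_nonneg hα] at overlap_le
  calc (1 + α * bondCount ε * c ^ 2) * W
      = W + 2 * α * (bondCount ε * (c ^ 2 - c ^ 2 / 2) * W) := by ring
    _ ≤ W + 2 * α * (bondCount ε * (c ^ 2 - (Real.exp (6 * α) - 1)) * W) := by gcongr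
    _ ≤ W + 2 * α * ∑ σ ∈ alignedSector n c, gibbsWeight (-α) β ε σ * matchedOverlap ε σ := by
        gcongr
    _ = ∑ σ ∈ alignedSector n c, gibbsWeight (-α) β ε σ * (2 * α * matchedOverlap ε σ + 1) := by
        rw [Finset.mul_sum, ← Finset.sum_add_distrib]
        exact Finset.sum_congr rfl fun σ _ => by ring
    _ ≤ ∑ σ ∈ alignedSector n c, gibbsWeight α β ε σ := by
        refine Finset.sum_le_sum fun σ _ => ?_
        have tilt : gibbsWeight α β ε σ =
            gibbsWeight (-α) β ε σ * Real.exp (2 * α * matchedOverlap ε σ) := by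
          rw [gibbsWeight, gibbsWeight, mul_assoc _ (Real.exp _), ← Real.exp_add]
          ring_nf
        rw [tilt]
        have := gibbsWeight_pos (-α) β ε σ
        gcongr
        exact Real.add_one_le_exp _
    _ ≤ partitionFunction α β ε := Finset.sum_le_sum_of_subset_of_nonneg (Finset.subset_univ _)
        fun σ _ _ => (gibbsWeight_pos α β ε σ).le

lemma dilMagDist_real_opposite_le {n : ℕ} {α β c : ℝ} (hα : 0 ≤ α) (hc : 0 ≤ c)
    (hαc : Real.exp (6 * α) - 1 ≤ c ^ 2 / 2) (ε : Fin n → Bool) :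
    (dilMagDist n α β ε).real {x | c ≤ x.1 ∧ x.2 ≤ -c} ≤ (1 + α * bondCount ε * c ^ 2)⁻¹ := by
  classical
  have := bondCount_nonneg ε
  have measurable_sector : MeasurableSet {x : ℝ × ℝ | c ≤ x.1 ∧ x.2 ≤ -c} :=
    (measurableSet_le measurable_const measurable_fst).inter
      (measurableSet_le measurable_snd measurable_const)
  have flip_eq : ∑ σ : TwoConf n with
        (blockMag σ.1, blockMag σ.2) ∈ {x : ℝ × ℝ | c ≤ x.1 ∧ x.2 ≤ -c}, gibbsWeight α β ε σ =
      ∑ σ ∈ alignedSector n c, gibbsWeight (-α) β ε σ := by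
    refine (Finset.sum_equiv ((Equiv.refl _).prodCongr (flipSpins n)) (fun σ => ?_)
      fun σ _ => (gibbsWeight_flipSpins_right α β ε σ).symm).symm
    simp [alignedSector, blockMag_flipSpins]
  rw [dilMagDist_real_apply α β ε measurable_sector, flip_eq,
    div_le_iff₀ (partitionFunction_pos α β ε), ← div_eq_inv_mul, le_div_iff₀' (by positivity)]
  exact sum_alignedSector_neg_le_partitionFunction hα hc hαc ε

/-! ### The quenched limit -/

section QuenchedLimit

variable {ι : Type*} {l : Filter ι} {N : ι → ℕ} {α : ι → ℝ} {β m : ℝ}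

lemma tendsto_dilMagDist_real_fst_mem (hβ : 0 < β) (hm : m = Real.tanh (β / 2 * m)) (hm0 : 0 < m)
    (hN : Tendsto N l atTop) (hα : Tendsto α l (nhds 0)) (ε : ∀ i, Fin (N i) → Bool) {A : Set ℝ}
    (hA : IsClosed A) (hmA : ∀ a ∈ A, |a| ≠ m) :
    Tendsto (fun i => (dilMagDist (N i) (α i) β (ε i)).real {x | x.1 ∈ A}) l (nhds 0) := by
  obtain ⟨c, hc, exponent_gap⟩ := exists_meanFieldExponent_add_le (half_pos hβ) hm hm0 hA hmA
  have coupling_small : ∀ᶠ i in l, 2 * |α i| < c / 2 := by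
    have := hα.abs.const_mul 2
    rw [abs_zero, mul_zero] at this
    exact this.eventually_lt_const (half_pos hc)
  refine squeeze_zero' (Eventually.of_forall fun _ => measureReal_nonneg) ?_
    ((tendsto_natCast_add_one_mul_exp_neg (half_pos hc)).comp hN)
  filter_upwards [coupling_small] with i hi
  refine (dilMagDist_real_fst_mem_le hβ.le (ε i) hA.measurableSet exponent_gap).trans ?_
  rw [Function.comp_apply, ← neg_mul]
  gcongr
  linarith

lemma tendsto_dilMagDist_real_opposite (hα0 : ∀ i, 0 ≤ α i) (hα : Tendsto α l (nhds 0))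
    {ε : ∀ i, Fin (N i) → Bool} (hε : Tendsto (fun i => α i * bondCount (ε i)) l atTop)
    {c : ℝ} (hc : 0 < c) :
    Tendsto (fun i => (dilMagDist (N i) (α i) β (ε i)).real {x | c ≤ x.1 ∧ x.2 ≤ -c}) l
      (nhds 0) := by
  have coupling_small : ∀ᶠ i in l, Real.exp (6 * α i) - 1 < c ^ 2 / 2 := by
    have : Tendsto (fun i => Real.exp (6 * α i) - 1) l (nhds (Real.exp (6 * 0) - 1)) :=
      ((Real.continuous_exp.tendsto _).comp (hα.const_mul 6)).sub_const 1
    rw [mul_zero, Real.exp_zero, sub_self] at this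
    exact this.eventually_lt_const (by positivity)
  have factor_tendsto : Tendsto (fun i => 1 + α i * bondCount (ε i) * c ^ 2) l atTop :=
    tendsto_atTop_add_const_left l 1 (hε.atTop_mul_const (by positivity))
  refine squeeze_zero' (Eventually.of_forall fun _ => measureReal_nonneg) ?_
    (tendsto_inv_atTop_zero.comp factor_tendsto)
  filter_upwards [coupling_small] with i hi
  exact dilMagDist_real_opposite_le (hα0 i) hc.le hi.le (ε i)

/-- Two numbers whose absolute values are close to `m` are either both close to `m`, or both close
to `-m`, or of opposite signs and bounded away from `0`. -/
lemma compl_subset_union_swap_preimage {U : Set (ℝ × ℝ)} {δ : ℝ} (hδm : δ ≤ m / 2)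
    (hU : Metric.ball (m, m) δ ⊆ U) (hU' : Metric.ball (-m, -m) δ ⊆ U) :
    let T := {x : ℝ × ℝ | x.1 ∈ {a | δ ≤ |(|a|) - m|}} ∪
      {x : ℝ × ℝ | m / 2 ≤ x.1 ∧ x.2 ≤ -(m / 2)}
    Uᶜ ⊆ T ∪ Prod.swap ⁻¹' T := by
  rintro T ⟨a, b⟩ hab
  by_contra h
  simp only [T, Set.mem_union, Set.mem_preimage, Set.mem_ofPred_eq, Prod.swap_prod_mk, not_or,
    not_le, not_and] at h
  obtain ⟨⟨ha, hopp⟩, hb, hopp'⟩ := h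
  rcases abs_sub_lt_or_abs_add_lt ha with ha | ha <;>
    rcases abs_sub_lt_or_abs_add_lt hb with hb | hb
  · exact hab (hU (by simp [Prod.dist_eq, Real.dist_eq, ha, hb]))
  · linarith [hopp (by linarith [abs_lt.1 ha]), abs_lt.1 hb]
  · linarith [hopp' (by linarith [abs_lt.1 hb]), abs_lt.1 ha]
  · exact hab (hU' (by simp [Prod.dist_eq, Real.dist_eq, ha, hb]))

lemma tendsto_dilMagDist_real_compl (hβ : 0 < β) (hm : m = Real.tanh (β / 2 * m)) (hm0 : 0 < m)
    (hN : Tendsto N l atTop) (hα0 : ∀ i, 0 ≤ α i) (hα : Tendsto α l (nhds 0))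
    {ε : ∀ i, Fin (N i) → Bool} (hε : Tendsto (fun i => α i * bondCount (ε i)) l atTop)
    {U : Set (ℝ × ℝ)} (hU : U ∈ nhds (m, m)) (hU' : U ∈ nhds (-m, -m)) :
    Tendsto (fun i => (dilMagDist (N i) (α i) β (ε i)).real Uᶜ) l (nhds 0) := by
  obtain ⟨δ₁, hδ₁, ball_subset⟩ := Metric.mem_nhds_iff.1 hU
  obtain ⟨δ₂, hδ₂, ball_subset'⟩ := Metric.mem_nhds_iff.1 hU'
  set δ := min (min δ₁ δ₂) (m / 2)
  have hδ : 0 < δ := lt_min (lt_min hδ₁ hδ₂) (half_pos hm0)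
  set A := {a : ℝ | δ ≤ |(|a|) - m|}
  have A_closed : IsClosed A := isClosed_le continuous_const (by fun_prop)
  have A_avoids : ∀ a ∈ A, |a| ≠ m := by
    rintro a ha rfl
    exact hδ.not_ge (by simpa [A] using ha)
  set opposite := {x : ℝ × ℝ | m / 2 ≤ x.1 ∧ x.2 ≤ -(m / 2)}
  set T := {x : ℝ × ℝ | x.1 ∈ A} ∪ opposite
  have T_measurable : MeasurableSet T := (measurable_fst A_closed.measurableSet).union
    ((measurableSet_le measurable_const measurable_fst).inter
      (measurableSet_le measurable_snd measurable_const))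
  have compl_subset : Uᶜ ⊆ T ∪ Prod.swap ⁻¹' T :=
    compl_subset_union_swap_preimage (min_le_right _ _)
      ((Metric.ball_subset_ball ((min_le_left _ _).trans (min_le_left _ _))).trans ball_subset)
      ((Metric.ball_subset_ball ((min_le_left _ _).trans (min_le_right _ _))).trans ball_subset')
  have parts_tendsto := ((tendsto_dilMagDist_real_fst_mem hβ hm hm0 hN hα ε A_closed A_avoids).add
    (tendsto_dilMagDist_real_opposite (β := β) hα0 hα hε (half_pos hm0))).const_mul 2
  rw [add_zero, mul_zero] at parts_tendsto
  refine squeeze_zero (fun _ => measureReal_nonneg) (fun i => ?_) parts_tendsto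
  set μ := dilMagDist (N i) (α i) β (ε i)
  calc μ.real Uᶜ ≤ μ.real (T ∪ Prod.swap ⁻¹' T) := measureReal_mono compl_subset
    _ ≤ μ.real T + μ.real (Prod.swap ⁻¹' T) := measureReal_union_le _ _
    _ = 2 * μ.real T := by
        rw [(measurePreserving_swap_dilMagDist (α i) β (ε i)).measureReal_preimage
          T_measurable.nullMeasurableSet, two_mul]
    _ ≤ 2 * (μ.real {x | x.1 ∈ A} + μ.real opposite) := by
        gcongr
        exact measureReal_union_le _ _

lemma tendsto_integral_dilMagDist (hβ : 0 < β) (hm : m = Real.tanh (β / 2 * m)) (hm0 : 0 < m)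
    (hN : Tendsto N l atTop) (hα0 : ∀ i, 0 ≤ α i) (hα : Tendsto α l (nhds 0))
    {ε : ∀ i, Fin (N i) → Bool} (hε : Tendsto (fun i => α i * bondCount (ε i)) l atTop)
    (f : BoundedContinuousFunction (ℝ × ℝ) ℝ) :
    Tendsto (fun i => ∫ x, f x ∂(dilMagDist (N i) (α i) β (ε i))) l
      (nhds (∫ x, f x ∂((2 : ENNReal)⁻¹ •
        (Measure.dirac ((m, m) : ℝ × ℝ) + Measure.dirac ((-m, -m) : ℝ × ℝ))))) :=
  tendsto_integral_of_isNegInvariant (a := ((m, m) : ℝ × ℝ)) (fun _ hU hmU hmU' =>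
    tendsto_dilMagDist_real_compl hβ hm hm0 hN hα0 hα hε (hU.mem_nhds hmU) (hU.mem_nhds hmU')) f

end QuenchedLimit

/-! ### Typical dilutions -/

lemma prod_bernoulli_weight_nonneg {n : ℕ} {q : ℝ} (hq : q ∈ Set.Icc (0 : ℝ) 1)
    (ε : Fin n → Bool) : 0 ≤ ∏ i, if ε i then q else 1 - q :=
  Finset.prod_nonneg fun i _ => by split_ifs <;> linarith [hq.1, hq.2]

lemma bernProb_nonneg {n : ℕ} {q : ℝ} (hq : q ∈ Set.Icc (0 : ℝ) 1) (A : Set (Fin n → Bool)) :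
    0 ≤ bernProb n q A :=
  Finset.sum_nonneg fun _ _ => Set.indicator_nonneg (fun ε _ => prod_bernoulli_weight_nonneg hq ε) _

lemma bernProb_mono {n : ℕ} {q : ℝ} (hq : q ∈ Set.Icc (0 : ℝ) 1) {A B : Set (Fin n → Bool)}
    (hAB : A ⊆ B) : bernProb n q A ≤ bernProb n q B :=
  Finset.sum_le_sum fun _ _ => Set.indicator_le_indicator_of_subset hAB
    (fun ε => prod_bernoulli_weight_nonneg hq ε) _

lemma sum_prod_mul_exp_neg_bondCount (n : ℕ) (q : ℝ) :
    ∑ ε : Fin n → Bool, (∏ i, if ε i then q else 1 - q) * Real.exp (-bondCount ε) =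
      (q * Real.exp (-1) + (1 - q)) ^ n := by
  calc ∑ ε : Fin n → Bool, (∏ i, if ε i then q else 1 - q) * Real.exp (-bondCount ε)
      = ∑ ε : Fin n → Bool,
          ∏ i, (if ε i then q else 1 - q) * Real.exp (-if ε i then (1 : ℝ) else 0) := by
        simp only [bondCount, ← Finset.sum_neg_distrib, Real.exp_sum, Finset.prod_mul_distrib]
    _ = ∏ _i : Fin n, ∑ b : Bool,
          (if b then q else 1 - q) * Real.exp (-if b then (1 : ℝ) else 0) := by
        rw [← Finset.sum_prod_piFinset, Fintype.piFinset_univ]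
    _ = (q * Real.exp (-1) + (1 - q)) ^ n := by simp

lemma bernProb_bondCount_lt_le {n : ℕ} {q : ℝ} (hq : q ∈ Set.Icc (0 : ℝ) 1) (a : ℝ) :
    bernProb n q {ε | bondCount ε < a} ≤ Real.exp (a - q * n / 2) := by
  have exp_neg_one_le : Real.exp (-1) ≤ 1 / 2 := by
    rw [Real.exp_neg, inv_le_comm₀ (Real.exp_pos 1) (by norm_num)]
    linarith [Real.exp_one_gt_d9]
  have base_le : q * Real.exp (-1) + (1 - q) ≤ Real.exp (-(q / 2)) := by
    have := mul_le_mul_of_nonneg_left exp_neg_one_le hq.1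
    linarith [Real.add_one_le_exp (-(q / 2))]
  have base_nonneg : 0 ≤ q * Real.exp (-1) + (1 - q) :=
    add_nonneg (mul_nonneg hq.1 (Real.exp_pos _).le) (sub_nonneg.2 hq.2)
  calc bernProb n q {ε | bondCount ε < a}
      ≤ ∑ ε : Fin n → Bool,
          Real.exp a * ((∏ i, if ε i then q else 1 - q) * Real.exp (-bondCount ε)) := by
        refine Finset.sum_le_sum fun ε _ => ?_
        have weight_nonneg := prod_bernoulli_weight_nonneg hq ε
        refine Set.indicator_apply_le' (fun hε => ?_) fun _ => by positivity
        rw [mul_left_comm, ← Real.exp_add]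
        exact le_mul_of_one_le_right weight_nonneg
          (Real.one_le_exp (by linarith [Set.mem_ofPred.1 hε]))
    _ = Real.exp a * (q * Real.exp (-1) + (1 - q)) ^ n := by
        rw [← Finset.mul_sum, sum_prod_mul_exp_neg_bondCount]
    _ ≤ Real.exp a * Real.exp (-(q / 2)) ^ n := by gcongr
    _ = Real.exp (a - q * n / 2) := by
        rw [← Real.exp_nat_mul, ← Real.exp_add]
        ring_nf

/-- The quenched limit along the filter of all `(n, ε)` with `n → ∞` and `K n ≤ bondCount ε`
says that the convergence is uniform over such `ε`. -/
lemma eventually_forall_abs_integral_dilMagDist_sub_le {α K : ℕ → ℝ} {β m η : ℝ} (hβ : 0 < β)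
    (hm : m = Real.tanh (β / 2 * m)) (hm0 : 0 < m) (hα0 : ∀ n, 0 ≤ α n)
    (hα : Tendsto α atTop (nhds 0)) (hK : Tendsto (fun n => α n * K n) atTop atTop)
    (f : BoundedContinuousFunction (ℝ × ℝ) ℝ) (hη : 0 < η) :
    ∀ᶠ n in atTop, ∀ ε : Fin n → Bool, K n ≤ bondCount ε →
      |(∫ x, f x ∂(dilMagDist n (α n) β ε)) - ∫ x, f x ∂((2 : ENNReal)⁻¹ •
        (Measure.dirac ((m, m) : ℝ × ℝ) + Measure.dirac ((-m, -m) : ℝ × ℝ)))| ≤ η := by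
  set l : Filter (Σ n, Fin n → Bool) :=
    comap Sigma.fst atTop ⊓ principal {x | K x.1 ≤ bondCount x.2}
  have size_tendsto : Tendsto Sigma.fst l atTop := tendsto_comap.mono_left inf_le_left
  have bonds_tendsto : Tendsto (fun x => α x.1 * bondCount x.2) l atTop := by
    refine tendsto_atTop_mono' l ?_ (hK.comp size_tendsto)
    filter_upwards [mem_inf_of_right (mem_principal_self _)] with x hx
    exact mul_le_mul_of_nonneg_left hx (hα0 x.1)
  have eventually_close := (tendsto_integral_dilMagDist hβ hm hm0 size_tendsto
    (fun x => hα0 x.1) (hα.comp size_tendsto) bonds_tendsto f).eventually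
      (Metric.closedBall_mem_nhds _ hη)
  rw [eventually_inf_principal, eventually_comap] at eventually_close
  filter_upwards [eventually_close] with n hn ε hε
  exact hn ⟨n, ε⟩ rfl hε

/-- Theorem 2(1): if `β > 2`, `α_N ↓ 0`, `N p(N) → ∞` and `p(N) N α_N → ∞`, then the
distribution of `m^N` under `μ^ε_{N,α_N,β}` converges in distribution in probability to
`(1/2)(δ_{(m⁺(β/2), m⁺(β/2))} + δ_{(m⁻(β/2), m⁻(β/2))})`. -/
theorem diluted_aligned_limit_in_probability (β : ℝ) (hβ : 2 < β) (mp : ℝ)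
    (hfix : mp = Real.tanh (β / 2 * mp))
    (hmax : ∀ z : ℝ, z = Real.tanh (β / 2 * z) → z ≤ mp)
    (α : ℕ → ℝ) (hαpos : ∀ N, 0 < α N)
    (hα0 : Tendsto α atTop (nhds 0))
    (p : ℕ → ℝ) (hp : ∀ N, p N ∈ Set.Ioc (0 : ℝ) 1)
    (hNp : Tendsto (fun N : ℕ => (N : ℝ) * p N) atTop atTop)
    (hpNα : Tendsto (fun N : ℕ => p N * N * α N) atTop atTop)
    (f : BoundedContinuousFunction (ℝ × ℝ) ℝ) (η : ℝ) (hη : 0 < η) :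
    Tendsto (fun n : ℕ =>
        bernProb n (p (2 * n))
          {ε : Fin n → Bool |
            η < |(∫ x, f x ∂(dilMagDist n (α (2 * n)) β ε)) -
              ∫ x, f x ∂((2 : ENNReal)⁻¹ •
                (Measure.dirac ((mp, mp) : ℝ × ℝ) + Measure.dirac ((-mp, -mp) : ℝ × ℝ)))|})
      atTop (nhds 0) := by
  have hp' (N : ℕ) : p N ∈ Set.Icc (0 : ℝ) 1 := Set.Ioc_subset_Icc_self (hp N)
  have double : Tendsto (fun n : ℕ => 2 * n) atTop atTop :=
    tendsto_id.const_mul_atTop' two_pos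
  obtain ⟨z, hz, hz_fix⟩ := exists_pos_eq_tanh_mul ((one_lt_div two_pos).2 hβ)
  have typical := eventually_forall_abs_integral_dilMagDist_sub_le (zero_lt_two.trans hβ) hfix
    (hz.trans_le (hmax z hz_fix)) (fun n => (hαpos (2 * n)).le) (hα0.comp double)
    (K := fun n => p (2 * n) * n / 4)
    (((hpNα.comp double).atTop_div_const (by norm_num : (0 : ℝ) < 8)).congr fun n => by
      simp only [Function.comp_apply]
      push_cast
      ring) f hη
  have atypical_rare : Tendsto (fun n : ℕ => Real.exp (-(p (2 * n) * n / 4))) atTop (nhds 0) :=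
    Real.tendsto_exp_neg_atTop_nhds_zero.comp
      (((hNp.comp double).atTop_div_const (by norm_num : (0 : ℝ) < 8)).congr fun n => by
        simp only [Function.comp_apply]
        push_cast
        ring)
  refine squeeze_zero' (Eventually.of_forall fun n => bernProb_nonneg (hp' _) _) ?_ atypical_rare
  filter_upwards [typical] with n hn
  refine (bernProb_mono (hp' _) fun ε (hε : η < _) => ?_).trans
    ((bernProb_bondCount_lt_le (hp' _) (p (2 * n) * n / 4)).trans_eq (by ring_nf))
  exact not_le.1 fun hK => hε.not_ge (hn ε hK)

end
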